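/- (Sample complexity under uniform logging) In the setting of the oracle inequality for Gaussian linear policies under uniform logging (prior P = N(μ0, I_{dK}), posteriors N(μ, I_{dK}) over hypotheses h_θ(x) = argmax_a φ(x)ᵀθ_a, uniform logging policy π0(a|x) = 1/K, λ = 1/√n, learned parameter μ̂ minimizing the bound-based objective and μ_* minimizing the risk over the Gaussian family), let δ ∈ (0,1), α ∈ [1 − log 2/log K, 1], and ε > 2(1 − K^{α−1}). If √n ≥ ( ‖μ_*−μ0‖ + ‖μ_*−μ0‖² + 2·log(4/δ) + √(2·log(4√n/δ)) + 2K^{2α} ) / ( ε − 2(1 − K^{α−1}) ), then P( R(π_{Q_{μ̂}}) ≤ R(π_{Q_{μ_*}}) + ε ) ≥ 1 − δ. -/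

import Mathlib

open MeasureTheory ProbabilityTheory Real

open Classical in
/-- Kullback–Leibler divergence between two measures, valued in `ℝ≥0∞` (junk value `⊤` when
`Q` is not absolutely continuous w.r.t. `P` or the log-likelihood ratio is not integrable). -/
noncomputable def klDiv {α : Type*} [MeasurableSpace α] (Q P : Measure α) : ENNReal :=
  if Q ≪ P ∧ Integrable (llr Q P) Q then ENNReal.ofReal (∫ x, llr Q P x ∂Q) else ⊤

/-!
Averaging `1{h_θ(x) = a}` over `θ ∼ Q` gives `π_Q(a|x)`, so the empirical terms of the objective
are `Q`-averages of i.i.d. sums of single-hypothesis costs. From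
`exp (x - x² / 2) ≤ 1 + x + x² / 2`, a bounded variable `Y` satisfies
`𝔼 exp (Y - Y² / 2 - 𝔼 [Y + Y² / 2]) ≤ 1`; Markov's inequality for the mixture of these
exponentials over the prior, followed by the Donsker–Varadhan inequality, bounds the deviation of
the risk estimate for all posteriors at once. Taking `Y` to be `±λ` times the weighted cost makes
the bound two-sided at the price of a union bound.

Under uniform logging the estimate concentrates around `K ^ (α - 1)` times the risk, and the bias
term of the objective is the constant `1 - K ^ (α - 1)` for every policy. It therefore cancels when
the objective at the learned policy is compared with the objective at the optimal one. The KL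
divergence between the Gaussians is half the squared distance of their means.
-/

section KullbackLeibler

theorem klDiv_eq_informationTheory_klDiv {E : Type*} [MeasurableSpace E] (Q P : Measure E)
    [IsProbabilityMeasure Q] [IsProbabilityMeasure P] :
    klDiv Q P = InformationTheory.klDiv Q P := by
  simp only [klDiv, InformationTheory.klDiv_def, probReal_univ, add_sub_cancel_right]

/-- The Donsker–Varadhan variational inequality. -/
theorem integral_le_toReal_klDiv_add_log_integral_exp {E : Type*} [MeasurableSpace E]
    {Q P : Measure E} [IsProbabilityMeasure Q] [IsProbabilityMeasure P]
    (hQP : InformationTheory.klDiv Q P ≠ ⊤) {f : E → ℝ} (hfQ : Integrable f Q)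
    (hfP : Integrable (fun x ↦ exp (f x)) P) :
    ∫ x, f x ∂Q ≤ (InformationTheory.klDiv Q P).toReal + log (∫ x, exp (f x) ∂P) := by
  obtain ⟨hac, hllr⟩ := InformationTheory.klDiv_ne_top_iff.mp hQP
  have := isProbabilityMeasure_tilted hfP
  have gibbs := InformationTheory.integral_llr_add_sub_measure_univ_nonneg
    (hac.trans (absolutelyContinuous_tilted hfP))
    (integrable_llr_tilted_right hac hfQ hllr hfP)
  rw [integral_llr_tilted_right hac hfQ hfP hllr] at gibbs
  rw [InformationTheory.toReal_klDiv_of_measure_eq hac (by simp)]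
  simp only [probReal_univ] at gibbs
  linarith

theorem klDiv_tilted_self {E : Type*} [MeasurableSpace E] {P : Measure E}
    [IsProbabilityMeasure P] {f : E → ℝ} (hf : Integrable (fun x ↦ exp (f x)) P)
    (hfi : Integrable f (P.tilted f)) :
    InformationTheory.klDiv (P.tilted f) P =
      ENNReal.ofReal (∫ x, f x ∂P.tilted f - log (∫ x, exp (f x) ∂P)) := by
  have := isProbabilityMeasure_tilted hf
  have hac := tilted_absolutelyContinuous P f
  have hllr : llr (P.tilted f) P =ᵐ[P.tilted f] fun x ↦ f x - log (∫ x, exp (f x) ∂P) :=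
    hac.ae_le (log_rnDeriv_tilted_left_self hf)
  rw [InformationTheory.klDiv_of_ac_of_integrable hac
      ((hfi.sub (integrable_const _)).congr hllr.symm),
    integral_congr_ae hllr, integral_sub hfi (integrable_const _)]
  simp

theorem tilted_mul_gaussianReal (m₀ : ℝ) {v : NNReal} (hv : v ≠ 0) (t : ℝ) :
    (gaussianReal m₀ v).tilted (fun x ↦ t * x) = gaussianReal (m₀ + v * t) v := by
  have hmgf : ∫ x, exp (t * x) ∂gaussianReal m₀ v = exp (m₀ * t + v * t ^ 2 / 2) :=
    congrFun mgf_fun_id_gaussianReal t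
  rw [Measure.tilted, hmgf, gaussianReal_of_var_ne_zero _ hv, gaussianReal_of_var_ne_zero _ hv,
    ← withDensity_mul _ (measurable_gaussianPDF _ _) (by fun_prop)]
  congr 1 with x
  have hv' : (v : ℝ) ≠ 0 := by exact_mod_cast hv
  rw [Pi.mul_apply, gaussianPDF, gaussianPDF, ← ENNReal.ofReal_mul (gaussianPDFReal_nonneg _ _ _),
    gaussianPDFReal, gaussianPDFReal, mul_assoc, ← exp_sub, ← exp_add]
  congr 3
  field_simp
  ring

theorem klDiv_gaussianReal (m m₀ : ℝ) {v : NNReal} (hv : v ≠ 0) :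
    InformationTheory.klDiv (gaussianReal m v) (gaussianReal m₀ v) =
      ENNReal.ofReal ((m - m₀) ^ 2 / (2 * v)) := by
  have hv' : (v : ℝ) ≠ 0 := by exact_mod_cast hv
  have htilt : gaussianReal m v = (gaussianReal m₀ v).tilted fun x ↦ (m - m₀) / v * x := by
    rw [tilted_mul_gaussianReal m₀ hv, mul_div_cancel₀ _ hv', add_sub_cancel]
  have hmgf : ∫ x, exp ((m - m₀) / v * x) ∂gaussianReal m₀ v =
      exp (m₀ * ((m - m₀) / v) + v * ((m - m₀) / v) ^ 2 / 2) :=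
    congrFun mgf_fun_id_gaussianReal _
  have hint : Integrable (fun x ↦ (m - m₀) / v * x) (gaussianReal m v) :=
    ((memLp_id_gaussianReal 1).integrable le_rfl).const_mul _
  rw [htilt, klDiv_tilted_self (integrable_exp_mul_gaussianReal _) (htilt ▸ hint), hmgf,
    log_exp, ← htilt, integral_const_mul, integral_id_gaussianReal]
  congr 1
  field_simp
  ring

variable {ι : Type*} [Fintype ι] {E : ι → Type*} [∀ i, MeasurableSpace (E i)]

theorem lintegral_pi_prod (P : ∀ i, Measure (E i)) [∀ i, IsProbabilityMeasure (P i)]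
    {g : ∀ i, E i → ENNReal} (hg : ∀ i, Measurable (g i)) :
    ∫⁻ x, ∏ i, g i (x i) ∂Measure.pi P = ∏ i, ∫⁻ y, g i y ∂P i := by
  rw [lintegral_prod_eq_prod_lintegral_of_indepFun _ (fun i (x : ∀ i, E i) ↦ g i (x i))
    (iIndepFun_pi fun i ↦ (hg i).aemeasurable) fun i ↦ (hg i).comp (measurable_pi_apply i)]
  exact Finset.prod_congr rfl fun i _ ↦ (measurePreserving_eval P i).lintegral_comp (hg i)

theorem pi_withDensity (P : ∀ i, Measure (E i)) [∀ i, IsProbabilityMeasure (P i)]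
    {g : ∀ i, E i → ENNReal} (hg : ∀ i, Measurable (g i))
    [∀ i, SigmaFinite ((P i).withDensity (g i))] :
    Measure.pi (fun i ↦ (P i).withDensity (g i)) =
      (Measure.pi P).withDensity fun x ↦ ∏ i, g i (x i) := by
  refine Measure.pi_eq fun s hs ↦ ?_
  have hind (x : ∀ i, E i) : (Set.univ.pi s).indicator (fun x ↦ ∏ i, g i (x i)) x =
      ∏ i, (s i).indicator (g i) (x i) := by
    classical
    simp only [Set.indicator_apply, Set.mem_univ_pi, Finset.prod_ite_zero, Finset.mem_univ,
      true_imp_iff]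
  rw [withDensity_apply _ (.univ_pi hs), ← lintegral_indicator (.univ_pi hs)]
  simp only [hind]
  rw [lintegral_pi_prod P fun i ↦ (hg i).indicator (hs i)]
  exact Finset.prod_congr rfl fun i _ ↦ by
    rw [lintegral_indicator (hs i), withDensity_apply _ (hs i)]

variable {P Q : ∀ i, Measure (E i)} [∀ i, IsProbabilityMeasure (P i)]
  [∀ i, IsProbabilityMeasure (Q i)]

theorem pi_eq_withDensity_prod_rnDeriv (h : ∀ i, Q i ≪ P i) :
    Measure.pi Q = (Measure.pi P).withDensity fun x ↦ ∏ i, (Q i).rnDeriv (P i) (x i) := by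
  have hQ (i : ι) : (P i).withDensity ((Q i).rnDeriv (P i)) = Q i :=
    Measure.withDensity_rnDeriv_eq _ _ (h i)
  have (i : ι) : SigmaFinite ((P i).withDensity ((Q i).rnDeriv (P i))) := by
    rw [hQ]; infer_instance
  rw [← pi_withDensity P fun i ↦ Measure.measurable_rnDeriv _ _]
  simp only [hQ]

theorem absolutelyContinuous_pi (h : ∀ i, Q i ≪ P i) : Measure.pi Q ≪ Measure.pi P :=
  pi_eq_withDensity_prod_rnDeriv h ▸ withDensity_absolutelyContinuous _ _

theorem llr_pi (h : ∀ i, Q i ≪ P i) :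
    llr (Measure.pi Q) (Measure.pi P) =ᵐ[Measure.pi Q]
      fun x ↦ ∑ i, llr (Q i) (P i) (x i) := by
  have hrn : (Measure.pi Q).rnDeriv (Measure.pi P) =ᵐ[Measure.pi P]
      fun x ↦ ∏ i, (Q i).rnDeriv (P i) (x i) := by
    rw [pi_eq_withDensity_prod_rnDeriv h]
    exact Measure.rnDeriv_withDensity _ (by fun_prop)
  have hpos (i : ι) : ∀ᵐ x ∂Measure.pi Q, 0 < ((Q i).rnDeriv (P i) (x i)).toReal := by
    refine (measurePreserving_eval Q i).quasiMeasurePreserving.ae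
      (p := fun y ↦ 0 < ((Q i).rnDeriv (P i) y).toReal) ?_
    filter_upwards [Measure.rnDeriv_pos (h i), (h i).ae_le (Measure.rnDeriv_lt_top (Q i) (P i))]
      with y hy hy' using ENNReal.toReal_pos hy.ne' hy'.ne
  filter_upwards [(absolutelyContinuous_pi h).ae_le hrn, ae_all_iff.mpr hpos] with x hx hxpos
  rw [llr, hx, ENNReal.toReal_prod, log_prod fun i _ ↦ (hxpos i).ne']
  rfl

theorem klDiv_pi (h : ∀ i, InformationTheory.klDiv (Q i) (P i) ≠ ⊤) :
    InformationTheory.klDiv (Measure.pi Q) (Measure.pi P) =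
      ∑ i, InformationTheory.klDiv (Q i) (P i) := by
  have hac (i : ι) := (InformationTheory.klDiv_ne_top_iff.mp (h i)).1
  have hint (i : ι) := integrable_comp_eval (InformationTheory.klDiv_ne_top_iff.mp (h i)).2
  have hpi := absolutelyContinuous_pi hac
  have hpi_int : Integrable (llr (Measure.pi Q) (Measure.pi P)) (Measure.pi Q) :=
    (integrable_finsetSum _ fun i _ ↦ hint i).congr (llr_pi hac).symm
  rw [← ENNReal.toReal_eq_toReal_iff' (InformationTheory.klDiv_ne_top hpi hpi_int)
      (ENNReal.sum_ne_top.mpr fun i _ ↦ h i), ENNReal.toReal_sum fun i _ ↦ h i,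
    InformationTheory.toReal_klDiv_of_measure_eq hpi (by simp), integral_congr_ae (llr_pi hac),
    integral_finsetSum _ fun i _ ↦ hint i]
  refine Finset.sum_congr rfl fun i _ ↦ ?_
  rw [integral_comp_eval (stronglyMeasurable_llr _ _).aestronglyMeasurable,
    InformationTheory.toReal_klDiv_of_measure_eq (hac i) (by simp)]

theorem klDiv_pi_pi_gaussianReal {κ : Type*} [Fintype κ] (m m₀ : ι → κ → ℝ) {v : NNReal}
    (hv : v ≠ 0) :
    InformationTheory.klDiv (Measure.pi fun i ↦ Measure.pi fun j ↦ gaussianReal (m i j) v)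
        (Measure.pi fun i ↦ Measure.pi fun j ↦ gaussianReal (m₀ i j) v) =
      ENNReal.ofReal ((∑ i, ∑ j, (m i j - m₀ i j) ^ 2) / (2 * v)) := by
  have hrow (i : ι) : InformationTheory.klDiv (Measure.pi fun j ↦ gaussianReal (m i j) v)
      (Measure.pi fun j ↦ gaussianReal (m₀ i j) v) =
        ENNReal.ofReal ((∑ j, (m i j - m₀ i j) ^ 2) / (2 * v)) := by
    rw [klDiv_pi fun j ↦ by rw [klDiv_gaussianReal _ _ hv]; exact ENNReal.ofReal_ne_top,
      Finset.sum_div, ENNReal.ofReal_sum_of_nonneg fun j _ ↦ by positivity]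
    simp only [klDiv_gaussianReal _ _ hv]
  rw [klDiv_pi fun i ↦ by rw [hrow]; exact ENNReal.ofReal_ne_top,
    Finset.sum_div, ENNReal.ofReal_sum_of_nonneg fun i _ ↦ by positivity]
  simp only [hrow]

end KullbackLeibler

section ExponentialMoment

theorem exp_sub_sq_div_two_le (x : ℝ) : exp (x - x ^ 2 / 2) ≤ 1 + x + x ^ 2 / 2 := by
  have hderiv (y : ℝ) : HasDerivAt (fun y ↦ (1 + y + y ^ 2 / 2) * exp (y ^ 2 / 2 - y))
      (y * (1 + y / 2 + y ^ 2 / 2) * exp (y ^ 2 / 2 - y)) y := by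
    have hsq : HasDerivAt (fun y : ℝ ↦ y ^ 2 / 2) y y := by
      simpa using (hasDerivAt_pow 2 y).div_const 2
    have hprod := (((hasDerivAt_id' y).const_add 1).add hsq).mul (hsq.sub (hasDerivAt_id' y)).exp
    refine hprod.congr_deriv ?_
    simp only [Pi.add_apply, Pi.sub_apply]
    ring
  have hpos (y : ℝ) : 0 < (1 + y / 2 + y ^ 2 / 2) * exp (y ^ 2 / 2 - y) :=
    mul_pos (by nlinarith [sq_nonneg (y + 1 / 2)]) (exp_pos _)
  have hmin : (1 : ℝ) ≤ (1 + x + x ^ 2 / 2) * exp (x ^ 2 / 2 - x) := by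
    have := isMinOn_univ_of_deriv (b := 0) (hderiv 0).continuousAt
      (fun y _ ↦ (hderiv y).differentiableAt.differentiableWithinAt)
      (fun y _ ↦ (hderiv y).differentiableAt.differentiableWithinAt)
      (fun y hy ↦ by
        rw [(hderiv y).deriv, mul_assoc]
        exact mul_nonpos_of_nonpos_of_nonneg (Set.mem_Iio.mp hy).le (hpos y).le)
      (fun y hy ↦ by
        rw [(hderiv y).deriv, mul_assoc]
        exact mul_nonneg (Set.mem_Ioi.mp hy).le (hpos y).le)
      (Set.mem_univ x)
    simpa using this
  rwa [← neg_sub, exp_neg, ← div_eq_mul_inv, one_le_div (exp_pos _)] at hmin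

theorem abs_add_sq_div_two_le {x C : ℝ} (hx : |x| ≤ C) : |x + x ^ 2 / 2| ≤ C + C ^ 2 / 2 := by
  have hsq : x ^ 2 ≤ C ^ 2 := sq_le_sq.mpr (hx.trans (le_abs_self C))
  have := abs_le.mp hx
  exact abs_le.mpr ⟨by linarith [sq_nonneg x, sq_nonneg C], by linarith⟩

theorem integral_exp_sub_sq_div_two_le {Z : Type*} [MeasurableSpace Z] {D : Measure Z}
    [IsProbabilityMeasure D] {Y : Z → ℝ} (hY : MemLp Y 2 D) :
    ∫ z, exp (Y z - Y z ^ 2 / 2) ∂D ≤ exp (∫ z, (Y z + Y z ^ 2 / 2) ∂D) := by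
  have hint : Integrable (fun z ↦ Y z + Y z ^ 2 / 2) D :=
    (hY.integrable one_le_two).add (hY.integrable_sq.div_const 2)
  calc ∫ z, exp (Y z - Y z ^ 2 / 2) ∂D
      ≤ ∫ z, (1 + (Y z + Y z ^ 2 / 2)) ∂D :=
        integral_mono_of_nonneg (ae_of_all _ fun z ↦ (exp_pos _).le)
          ((integrable_const 1).add hint)
          (ae_of_all _ fun z ↦ (exp_sub_sq_div_two_le (Y z)).trans_eq (add_assoc _ _ _))
    _ = ∫ z, (Y z + Y z ^ 2 / 2) ∂D + 1 := by
        rw [integral_add (integrable_const 1) hint, integral_const, probReal_univ, one_smul,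
          add_comm]
    _ ≤ exp (∫ z, (Y z + Y z ^ 2 / 2) ∂D) := add_one_le_exp _

theorem lintegral_exp_sub_sq_div_two_sub_integral_le_one {Z : Type*} [MeasurableSpace Z]
    {D : Measure Z} [IsProbabilityMeasure D] {Y : Z → ℝ} (hY : MemLp Y 2 D) :
    ∫⁻ z, ENNReal.ofReal (exp (Y z - Y z ^ 2 / 2 - ∫ z, (Y z + Y z ^ 2 / 2) ∂D)) ∂D ≤ 1 := by
  have hmeas : AEMeasurable Y D := hY.1.aemeasurable
  have hbound (z : Z) : Y z - Y z ^ 2 / 2 ≤ 1 / 2 := by linarith [sq_nonneg (Y z - 1)]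
  have hint : Integrable (fun z ↦ exp (Y z - Y z ^ 2 / 2)) D :=
    .of_bound (by fun_prop) (exp (1 / 2)) (ae_of_all _ fun z ↦
      (norm_of_nonneg (exp_pos _).le).trans_le (exp_le_exp.mpr (hbound z)))
  simp only [exp_sub _ (∫ z, (Y z + Y z ^ 2 / 2) ∂D)]
  rw [← ofReal_integral_eq_lintegral_ofReal (hint.div_const _) (ae_of_all _ fun _ ↦ by positivity),
    ENNReal.ofReal_le_one, integral_div]
  exact div_le_one_of_le₀ (integral_exp_sub_sq_div_two_le hY) (exp_pos _).le

end ExponentialMoment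

section PACBayes

variable {Θ Z ι : Type*} [MeasurableSpace Θ] [MeasurableSpace Z] [Fintype ι]

theorem integral_le_toReal_klDiv_add_of_lintegral_exp_le {Q P : Measure Θ}
    [IsProbabilityMeasure Q] [IsProbabilityMeasure P] (hQP : InformationTheory.klDiv Q P ≠ ⊤)
    {f : Θ → ℝ} (hf : Measurable f) (hfQ : Integrable f Q) {M : ℝ}
    (hM : ∫⁻ θ, ENNReal.ofReal (exp (f θ)) ∂P ≤ ENNReal.ofReal (exp M)) :
    ∫ θ, f θ ∂Q ≤ (InformationTheory.klDiv Q P).toReal + M := by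
  have hfP : Integrable (fun θ ↦ exp (f θ)) P :=
    ⟨by fun_prop, (hasFiniteIntegral_iff_ofReal (ae_of_all _ fun _ ↦ (exp_pos _).le)).mpr
      (hM.trans_lt ENNReal.ofReal_lt_top)⟩
  have hle : ∫ θ, exp (f θ) ∂P ≤ exp M := by
    rwa [← ofReal_integral_eq_lintegral_ofReal hfP (ae_of_all _ fun _ ↦ (exp_pos _).le),
      ENNReal.ofReal_le_ofReal_iff (exp_pos _).le] at hM
  have hlog : log (∫ θ, exp (f θ) ∂P) ≤ M :=
    (log_le_log (integral_exp_pos hfP) hle).trans_eq (log_exp M)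
  linarith [integral_le_toReal_klDiv_add_log_integral_exp hQP hfQ hfP]

theorem measurable_exp_sum_eval {f : Θ → Z → ℝ} (hf : Measurable fun q : Θ × Z ↦ f q.1 q.2) :
    Measurable fun q : (ι → Z) × Θ ↦ ENNReal.ofReal (exp (∑ i, f q.2 (q.1 i))) :=
  ((Finset.measurable_fun_sum _ fun i _ ↦ hf.comp (measurable_snd.prodMk
    ((measurable_pi_apply i).comp measurable_fst))).exp).ennreal_ofReal

theorem lintegral_mixture_exp_sum_le_one (P : Measure Θ) [IsProbabilityMeasure P]
    (D : Measure Z) [IsProbabilityMeasure D] {f : Θ → Z → ℝ}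
    (hf : Measurable fun q : Θ × Z ↦ f q.1 q.2)
    (hexp : ∀ θ, ∫⁻ z, ENNReal.ofReal (exp (f θ z)) ∂D ≤ 1) :
    ∫⁻ ω, ∫⁻ θ, ENNReal.ofReal (exp (∑ i, f θ (ω i))) ∂P ∂(Measure.pi fun _ : ι ↦ D) ≤ 1 := by
  rw [lintegral_lintegral_swap (measurable_exp_sum_eval hf).aemeasurable]
  have hθ (θ : Θ) :
      ∫⁻ ω, ENNReal.ofReal (exp (∑ i, f θ (ω i))) ∂(Measure.pi fun _ : ι ↦ D) ≤ 1 := by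
    have hmeas : Measurable fun z ↦ ENNReal.ofReal (exp (f θ z)) :=
      (hf.comp measurable_prodMk_left).exp.ennreal_ofReal
    simp only [exp_sum, ENNReal.ofReal_prod_of_nonneg fun _ _ ↦ (exp_pos _).le]
    rw [lintegral_pi_prod (fun _ ↦ D) fun _ ↦ hmeas]
    exact Finset.prod_le_one' fun _ _ ↦ hexp θ
  exact (lintegral_mono hθ).trans_eq (by simp)

/-- Markov's inequality for the `P`-mixture of the products `∏ i, exp (f θ (ω i))` controls all
posteriors at once, through the Donsker–Varadhan inequality. -/
theorem measure_pacBayes_failure_le (P : Measure Θ) [IsProbabilityMeasure P]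
    (D : Measure Z) [IsProbabilityMeasure D] {f : Θ → Z → ℝ}
    (hf : Measurable fun q : Θ × Z ↦ f q.1 q.2)
    (hexp : ∀ θ, ∫⁻ z, ENNReal.ofReal (exp (f θ z)) ∂D ≤ 1) {η : ℝ} (hη : 0 < η) :
    (Measure.pi fun _ : ι ↦ D) {ω | ∃ Q : Measure Θ, IsProbabilityMeasure Q ∧
        InformationTheory.klDiv Q P ≠ ⊤ ∧ Integrable (fun θ ↦ ∑ i, f θ (ω i)) Q ∧
        (InformationTheory.klDiv Q P).toReal + log (1 / η) < ∫ θ, ∑ i, f θ (ω i) ∂Q} ≤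
      ENNReal.ofReal η := by
  have hj := measurable_exp_sum_eval (ι := ι) hf
  have hη' : 0 < 1 / η := one_div_pos.mpr hη
  calc _ ≤ (Measure.pi fun _ : ι ↦ D) {ω | ENNReal.ofReal (1 / η) ≤
          ∫⁻ θ, ENNReal.ofReal (exp (∑ i, f θ (ω i))) ∂P} := by
        refine measure_mono fun ω ⟨Q, _, hQP, hint, hlt⟩ ↦ ?_
        by_contra! hω
        have hfω : Measurable fun θ ↦ ∑ i, f θ (ω i) :=
          Finset.measurable_fun_sum _ fun i _ ↦ hf.comp measurable_prodMk_right
        rw [Set.mem_ofPred_eq, not_le, ← exp_log hη'] at hω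
        exact hlt.not_ge
          (integral_le_toReal_klDiv_add_of_lintegral_exp_le hQP hfω hint hω.le)
    _ ≤ (∫⁻ ω, ∫⁻ θ, ENNReal.ofReal (exp (∑ i, f θ (ω i))) ∂P ∂(Measure.pi fun _ : ι ↦ D)) /
          ENNReal.ofReal (1 / η) :=
        meas_ge_le_lintegral_div hj.lintegral_prod_right'.aemeasurable
          (ENNReal.ofReal_pos.mpr hη').ne' ENNReal.ofReal_ne_top
    _ ≤ 1 / ENNReal.ofReal (1 / η) :=
        ENNReal.div_le_div_right (lintegral_mixture_exp_sum_le_one P D hf hexp) _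
    _ = ENNReal.ofReal η := by
        rw [one_div, one_div, ENNReal.ofReal_inv_of_pos hη, inv_inv]

theorem measure_secondMoment_pacBayes_failure_le (P : Measure Θ) [IsProbabilityMeasure P]
    (D : Measure Z) [IsProbabilityMeasure D] {ℓ : Θ → Z → ℝ}
    (hℓ : Measurable fun q : Θ × Z ↦ ℓ q.1 q.2) {C : ℝ} (hC : ∀ θ z, |ℓ θ z| ≤ C)
    {η : ℝ} (hη : 0 < η) :
    (Measure.pi fun _ : ι ↦ D) {ω | ∃ Q : Measure Θ, IsProbabilityMeasure Q ∧
        InformationTheory.klDiv Q P ≠ ⊤ ∧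
        (InformationTheory.klDiv Q P).toReal + log (1 / η) <
          ∑ i, ∫ θ, (ℓ θ (ω i) - ℓ θ (ω i) ^ 2 / 2) ∂Q -
            Fintype.card ι * ∫ θ, ∫ z, (ℓ θ z + ℓ θ z ^ 2 / 2) ∂D ∂Q} ≤
      ENNReal.ofReal η := by
  have hsq (θ : Θ) (z : Z) : |ℓ θ z ^ 2| ≤ C ^ 2 := by
    rw [abs_pow]; exact pow_le_pow_left₀ (abs_nonneg _) (hC θ z) 2
  set M : Θ → ℝ := fun θ ↦ ∫ z, (ℓ θ z + ℓ θ z ^ 2 / 2) ∂D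
  have hMmeas : Measurable M :=
    (hℓ.add ((hℓ.pow_const 2).div_const 2)).stronglyMeasurable.integral_prod_right'.measurable
  have hMbound (θ : Θ) : ‖M θ‖ ≤ C + C ^ 2 / 2 :=
    (norm_integral_le_of_norm_le_const
      (ae_of_all _ fun z ↦ abs_add_sq_div_two_le (hC θ z))).trans_eq (by simp)
  have hexp (θ : Θ) : ∫⁻ z, ENNReal.ofReal (exp (ℓ θ z - ℓ θ z ^ 2 / 2 - M θ)) ∂D ≤ 1 :=
    lintegral_exp_sub_sq_div_two_sub_integral_le_one (.of_bound
      (hℓ.comp measurable_prodMk_left).aestronglyMeasurable C (ae_of_all _ (hC θ)))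
  refine (measure_mono ?_).trans (measure_pacBayes_failure_le (ι := ι) P D
    (f := fun θ z ↦ ℓ θ z - ℓ θ z ^ 2 / 2 - M θ)
    ((hℓ.sub ((hℓ.pow_const 2).div_const 2)).sub (hMmeas.comp measurable_fst)) hexp hη)
  rintro ω ⟨Q, hQ, hQP, hlt⟩
  have hℓint (i : ι) : Integrable (fun θ ↦ ℓ θ (ω i) - ℓ θ (ω i) ^ 2 / 2) Q := by
    have hmeas : Measurable fun θ ↦ ℓ θ (ω i) := hℓ.comp measurable_prodMk_right
    exact (Integrable.of_bound hmeas.aestronglyMeasurable C (ae_of_all _ fun θ ↦ hC θ _)).sub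
      ((Integrable.of_bound (hmeas.pow_const 2).aestronglyMeasurable _
        (ae_of_all _ fun θ ↦ hsq θ _)).div_const 2)
  have hMint : Integrable M Q := .of_bound hMmeas.aestronglyMeasurable _ (ae_of_all _ hMbound)
  have hint (i : ι) : Integrable (fun θ ↦ ℓ θ (ω i) - ℓ θ (ω i) ^ 2 / 2 - M θ) Q :=
    (hℓint i).sub hMint
  refine ⟨Q, hQ, hQP, integrable_finsetSum _ fun i _ ↦ hint i, hlt.trans_eq ?_⟩
  rw [integral_finsetSum _ fun i _ ↦ hint i]
  simp only [integral_sub (hℓint _) hMint, Finset.sum_sub_distrib, Finset.sum_const,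
    Finset.card_univ, nsmul_eq_mul]

end PACBayes

section Policies

variable {X A Θ : Type*}

/-- The policy `π_Q` induced by a distribution `Q` over hypotheses: `ev θ x` is the action `h_θ(x)`,
and `π_Q(a|x)` is the `Q`-mass of the hypotheses choosing `a` in context `x`. -/
noncomputable def posteriorPolicy [MeasurableSpace Θ] (ev : Θ → X → A) (Q : Measure Θ)
    (x : X) (a : A) : ℝ :=
  (Q {θ | ev θ x = a}).toReal

/-- A stochastic policy, as a row-stochastic matrix indexed by contexts and actions. -/
structure IsPolicy [Fintype A] (pol : X → A → ℝ) : Prop where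
  nonneg : ∀ x a, 0 ≤ pol x a
  sum_eq_one : ∀ x, ∑ a, pol x a = 1

/-- The risk `R(π)`, the expected cost of a policy. -/
noncomputable def risk [MeasurableSpace X] [Fintype A] (ν : Measure X)
    (c pol : X → A → ℝ) : ℝ :=
  ∫ x, ∑ a, pol x a * c x a ∂ν

/-- The exponentially smoothed inverse propensity score estimate `R̂_n^α(π)` of the risk. -/
noncomputable def ipsRisk (c p0 : X → A → ℝ) (α : ℝ) (pol : X → A → ℝ) {n : ℕ}
    (ω : Fin n → X × A) : ℝ :=
  (n : ℝ)⁻¹ * ∑ i, c (ω i).1 (ω i).2 * pol (ω i).1 (ω i).2 / p0 (ω i).1 (ω i).2 ^ α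

/-- The term `B_n^α(π)` of the bound, which accounts for the bias of `ipsRisk`. -/
noncomputable def ipsBias [Fintype A] (p0 : X → A → ℝ) (α : ℝ) (pol : X → A → ℝ) {n : ℕ}
    (ω : Fin n → X × A) : ℝ :=
  1 - (n : ℝ)⁻¹ * ∑ i, ∑ a, pol (ω i).1 a * p0 (ω i).1 a ^ (1 - α)

/-- The term `V̄_n^α(π)` of the bound, a second-moment proxy for the fluctuations of `ipsRisk`. -/
noncomputable def ipsSecondMoment [Fintype A] (c p0 : X → A → ℝ) (α : ℝ) (pol : X → A → ℝ) {n : ℕ}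
    (ω : Fin n → X × A) : ℝ :=
  (n : ℝ)⁻¹ * ∑ i, ((∑ a, p0 (ω i).1 a * (pol (ω i).1 a / p0 (ω i).1 a ^ (2 * α))) +
    pol (ω i).1 (ω i).2 * c (ω i).1 (ω i).2 ^ 2 / p0 (ω i).1 (ω i).2 ^ (2 * α))

/-- The bound-based learning objective; `k` stands for the divergence `D_KL(Q‖P)` of the
distribution inducing `pol`, and `lam` for the parameter `λ`. -/
noncomputable def pacBayesObjective [Fintype A] (c p0 : X → A → ℝ) (α lam δ : ℝ)
    (pol : X → A → ℝ) (k : ℝ) {n : ℕ} (ω : Fin n → X × A) : ℝ :=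
  ipsRisk c p0 α pol ω + √((k + log (4 * √n / δ)) / (2 * n)) + ipsBias p0 α pol ω +
    (k + log (4 / δ)) / (n * lam) + lam / 2 * ipsSecondMoment c p0 α pol ω

section Policy

variable [Fintype A] {c pol : X → A → ℝ}

theorem IsPolicy.le_one (hpol : IsPolicy pol) (x : X) (a : A) : pol x a ≤ 1 :=
  (Finset.single_le_sum (fun b _ ↦ hpol.nonneg x b) (Finset.mem_univ a)).trans_eq
    (hpol.sum_eq_one x)

theorem isPolicy_posteriorPolicy [MeasurableSpace Θ] [MeasurableSpace A]
    [MeasurableSingletonClass A] {ev : Θ → X → A} (hev : ∀ x, Measurable fun θ ↦ ev θ x)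
    (Q : Measure Θ) [IsProbabilityMeasure Q] : IsPolicy (posteriorPolicy ev Q) where
  nonneg _ _ := ENNReal.toReal_nonneg
  sum_eq_one x := by
    have := sum_measureReal_preimage_singleton (μ := Q) (f := fun θ ↦ ev θ x) Finset.univ
      fun a _ ↦ hev x (measurableSet_singleton a)
    rwa [Finset.coe_univ, Set.preimage_univ, probReal_univ] at this

theorem IsPolicy.sum_mul_mem_Icc (hpol : IsPolicy pol) {x : X} {l u : ℝ}
    (hc : ∀ a, c x a ∈ Set.Icc l u) : ∑ a, pol x a * c x a ∈ Set.Icc l u :=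
  (convex_Icc l u).sum_mem (fun a _ ↦ hpol.nonneg x a) (hpol.sum_eq_one x) fun a _ ↦ hc a

theorem IsPolicy.risk_mem_Icc [MeasurableSpace X] {ν : Measure X} [IsProbabilityMeasure ν]
    (hpol : IsPolicy pol) {l u : ℝ} (hlu : 0 ∈ Set.Icc l u) (hc : ∀ x a, c x a ∈ Set.Icc l u) :
    risk ν c pol ∈ Set.Icc l u := by
  by_cases hint : Integrable (fun x ↦ ∑ a, pol x a * c x a) ν
  · exact (convex_Icc l u).integral_mem isClosed_Icc
      (ae_of_all _ fun x ↦ hpol.sum_mul_mem_Icc (hc x)) hint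
  · -- The integral defining the risk then has the junk value `0`.
    rwa [risk, integral_undef hint]

theorem risk_const_mul [MeasurableSpace X] (ν : Measure X) (c pol : X → A → ℝ) (s : ℝ) :
    risk ν (fun x a ↦ s * c x a) pol = s * risk ν c pol := by
  simp only [risk, mul_left_comm _ s, ← Finset.mul_sum, integral_const_mul]

end Policy

section PosteriorPolicy

variable [MeasurableSpace X] [MeasurableSpace A] [MeasurableSingletonClass A] [MeasurableSpace Θ]
  {ev : Θ → X → A}

theorem measurable_posteriorPolicy (hev : Measurable fun q : Θ × X ↦ ev q.1 q.2) (Q : Measure Θ)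
    [SFinite Q] (a : A) : Measurable fun x ↦ posteriorPolicy ev Q x a :=
  (measurable_measure_prodMk_right (hev (measurableSet_singleton a))).ennreal_toReal

theorem integrable_sum_posteriorPolicy_mul [Fintype A] {ν : Measure X} [IsFiniteMeasure ν]
    (hev : Measurable fun q : Θ × X ↦ ev q.1 q.2) (Q : Measure Θ) [IsProbabilityMeasure Q]
    {c : X → A → ℝ} (hcmeas : ∀ a, Measurable fun x ↦ c x a) {C : ℝ}
    (hc : ∀ x a, |c x a| ≤ C) : Integrable (fun x ↦ ∑ a, posteriorPolicy ev Q x a * c x a) ν := by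
  have hmeas : Measurable fun x ↦ ∑ a, posteriorPolicy ev Q x a * c x a :=
    Finset.measurable_fun_sum _ fun a _ ↦ (measurable_posteriorPolicy hev Q a).mul (hcmeas a)
  have hpol : IsPolicy (posteriorPolicy ev Q) :=
    isPolicy_posteriorPolicy (fun x ↦ hev.comp measurable_prodMk_right) Q
  exact .of_bound hmeas.aestronglyMeasurable C
    (ae_of_all _ fun x ↦ abs_le.mpr (hpol.sum_mul_mem_Icc fun a ↦ abs_le.mp (hc x a)))

theorem risk_posteriorPolicy_add_sq_div_two_le [Fintype A] {ν : Measure X}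
    [IsProbabilityMeasure ν] (hev : Measurable fun q : Θ × X ↦ ev q.1 q.2) (Q : Measure Θ)
    [IsProbabilityMeasure Q] {c : X → A → ℝ} (hcmeas : ∀ a, Measurable fun x ↦ c x a) {C : ℝ}
    (hc : ∀ x a, |c x a| ≤ C) :
    risk ν (fun x a ↦ c x a + c x a ^ 2 / 2) (posteriorPolicy ev Q) ≤
      risk ν c (posteriorPolicy ev Q) + C ^ 2 / 2 := by
  have hpol : IsPolicy (posteriorPolicy ev Q) :=
    isPolicy_posteriorPolicy (fun x ↦ hev.comp measurable_prodMk_right) Q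
  have hsq (x : X) (a : A) : c x a ^ 2 / 2 ∈ Set.Icc 0 (C ^ 2 / 2) :=
    ⟨by positivity, by linarith [sq_le_sq.mpr ((hc x a).trans (le_abs_self C))]⟩
  have hint := integrable_sum_posteriorPolicy_mul (ν := ν) hev Q hcmeas hc
  have hint' := integrable_sum_posteriorPolicy_mul (ν := ν) hev Q
    (fun a ↦ ((hcmeas a).add (((hcmeas a).pow_const 2).div_const 2) :))
    (fun x a ↦ abs_add_sq_div_two_le (hc x a))
  calc risk ν (fun x a ↦ c x a + c x a ^ 2 / 2) (posteriorPolicy ev Q)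
      ≤ ∫ x, (∑ a, posteriorPolicy ev Q x a * c x a + C ^ 2 / 2) ∂ν := by
        refine integral_mono hint' (hint.add (integrable_const _)) fun x ↦ ?_
        simp only [mul_add, Finset.sum_add_distrib]
        exact add_le_add_right
          (hpol.sum_mul_mem_Icc (c := fun x a ↦ c x a ^ 2 / 2) (hsq x)).2 _
    _ = risk ν c (posteriorPolicy ev Q) + C ^ 2 / 2 := by
        rw [integral_add hint (integrable_const _), integral_const, probReal_univ, one_smul, risk]

end PosteriorPolicy

section ConstantPropensity

variable {n : ℕ}

theorem ipsRisk_const (c pol : X → A → ℝ) (p α : ℝ) (ω : Fin n → X × A) :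
    ipsRisk c (fun _ _ ↦ p) α pol ω =
      (n : ℝ)⁻¹ * (∑ i, pol (ω i).1 (ω i).2 * c (ω i).1 (ω i).2) / p ^ α := by
  simp only [ipsRisk, mul_comm (c _ _)]
  rw [← Finset.sum_div, mul_div_assoc]

variable [Fintype A] {c pol : X → A → ℝ} {p : ℝ}

theorem IsPolicy.ipsBias_const (hpol : IsPolicy pol) (hn : n ≠ 0) (p α : ℝ) (ω : Fin n → X × A) :
    ipsBias (fun _ _ ↦ p) α pol ω = 1 - p ^ (1 - α) := by
  simp [ipsBias, ← Finset.sum_mul, hpol.sum_eq_one, hn]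

theorem IsPolicy.ipsSecondMoment_const (hpol : IsPolicy pol) (hn : n ≠ 0) (c : X → A → ℝ) (p α : ℝ)
    (ω : Fin n → X × A) :
    ipsSecondMoment c (fun _ _ ↦ p) α pol ω =
      (p + (n : ℝ)⁻¹ * ∑ i, pol (ω i).1 (ω i).2 * c (ω i).1 (ω i).2 ^ 2) / p ^ (2 * α) := by
  simp only [ipsSecondMoment, ← Finset.mul_sum, ← Finset.sum_div, hpol.sum_eq_one,
    Finset.sum_add_distrib, Finset.sum_const, Finset.card_univ, Fintype.card_fin, nsmul_eq_mul]
  field_simp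

theorem IsPolicy.ipsSecondMoment_const_le (hpol : IsPolicy pol) (hn : n ≠ 0)
    (hc : ∀ x a, |c x a| ≤ 1) (hp0 : 0 ≤ p) (hp1 : p ≤ 1) (α : ℝ)
    (ω : Fin n → X × A) :
    ipsSecondMoment c (fun _ _ ↦ p) α pol ω ≤ 2 / p ^ (2 * α) := by
  rw [hpol.ipsSecondMoment_const hn]
  have hterm (i : Fin n) : pol (ω i).1 (ω i).2 * c (ω i).1 (ω i).2 ^ 2 ≤ 1 :=
    mul_le_one₀ (hpol.le_one _ _) (sq_nonneg _) ((sq_le_one_iff_abs_le_one _).mpr (hc _ _))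
  have hsum : (n : ℝ)⁻¹ * ∑ i, pol (ω i).1 (ω i).2 * c (ω i).1 (ω i).2 ^ 2 ≤ 1 := by
    rw [inv_mul_le_iff₀ (by positivity), mul_one]
    exact (Finset.sum_le_sum fun i _ ↦ hterm i).trans_eq (by simp)
  gcongr
  linarith

theorem IsPolicy.ips_deviation_const_eq_sum (hpol : IsPolicy pol) (hn : n ≠ 0) (hp : 0 < p)
    (c : X → A → ℝ) (α t r : ℝ) (ω : Fin n → X × A) :
    n * t * (ipsRisk c (fun _ _ ↦ p) α pol ω - p ^ (1 - α) * r) -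
        n * t ^ 2 / 2 * ipsSecondMoment c (fun _ _ ↦ p) α pol ω =
      ∑ i, pol (ω i).1 (ω i).2 *
          (t / p ^ α * c (ω i).1 (ω i).2 - (t / p ^ α * c (ω i).1 (ω i).2) ^ 2 / 2) -
        n * (p * (t / p ^ α * r + (t / p ^ α) ^ 2 / 2)) := by
  have hterm (i : Fin n) : pol (ω i).1 (ω i).2 *
      (t / p ^ α * c (ω i).1 (ω i).2 - (t / p ^ α * c (ω i).1 (ω i).2) ^ 2 / 2) =
      t / p ^ α * (pol (ω i).1 (ω i).2 * c (ω i).1 (ω i).2) -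
        (t / p ^ α) ^ 2 / 2 * (pol (ω i).1 (ω i).2 * c (ω i).1 (ω i).2 ^ 2) := by
    ring
  simp only [hterm, Finset.sum_sub_distrib, ← Finset.mul_sum]
  have hpow : p ^ (2 * α) = (p ^ α) ^ 2 := by rw [two_mul, rpow_add hp, sq]
  rw [ipsRisk_const, hpol.ipsSecondMoment_const hn, hpow, rpow_sub hp, rpow_one]
  field_simp
  ring

end ConstantPropensity

section SelectedCost

/-- The cost `1{h_θ(x) = a} c(x, a)` incurred by the hypothesis `θ` on the logged pair `z = (x, a)`,
whose average over `Q` is the summand `π_Q(a|x) c(x, a)` of the risk. -/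
noncomputable def selectedCost (ev : Θ → X → A) (c : X → A → ℝ) (θ : Θ) (z : X × A) : ℝ :=
  {a | ev θ z.1 = a}.indicator (c z.1) z.2

variable {ev : Θ → X → A} {c : X → A → ℝ}

theorem map_selectedCost {f : ℝ → ℝ} (hf : f 0 = 0) (θ : Θ) (z : X × A) :
    f (selectedCost ev c θ z) = selectedCost ev (fun x a ↦ f (c x a)) θ z := by
  classical
  simp only [selectedCost, Set.indicator_apply, apply_ite f, hf]

theorem abs_selectedCost_le {C : ℝ} (hC : 0 ≤ C) (hc : ∀ x a, |c x a| ≤ C) (θ : Θ) (z : X × A) :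
    |selectedCost ev c θ z| ≤ C := by
  classical
  rw [selectedCost, Set.indicator_apply]
  split_ifs
  · exact hc _ _
  · rwa [abs_zero]

variable [MeasurableSpace A] [MeasurableSpace Θ] [MeasurableSingletonClass A]

theorem integral_selectedCost (hev : ∀ x, Measurable fun θ ↦ ev θ x) (Q : Measure Θ) (z : X × A) :
    ∫ θ, selectedCost ev c θ z ∂Q = posteriorPolicy ev Q z.1 z.2 * c z.1 z.2 :=
  integral_indicator_const (c z.1 z.2) (hev z.1 (measurableSet_singleton z.2))

theorem measurable_selectedCost [MeasurableSpace X] [Countable A]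
    (hev : Measurable fun q : Θ × X ↦ ev q.1 q.2) (hc : ∀ a, Measurable fun x ↦ c x a) :
    Measurable fun q : Θ × (X × A) ↦ selectedCost ev c q.1 q.2 := by
  have hc' : Measurable fun z : X × A ↦ c z.1 z.2 := measurable_from_prod_countable_left hc
  have hset : MeasurableSet {q : Θ × (X × A) | ev q.1 q.2.1 = q.2.2} :=
    measurableSet_eq_fun (hev.comp (measurable_fst.prodMk measurable_snd.fst)) measurable_snd.snd
  exact (hc'.comp measurable_snd).indicator hset

variable [MeasurableSpace X] [Fintype A] {ν : Measure X} [IsProbabilityMeasure ν]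
  {κ : Kernel X A} [IsMarkovKernel κ] {p : ℝ}

theorem integral_compProd_of_const_propensity (hκ : ∀ x a, (κ x).real {a} = p) {g : X × A → ℝ}
    (hg : Integrable g (ν ⊗ₘ κ)) :
    ∫ z, g z ∂(ν ⊗ₘ κ) = p * ∫ x, ∑ a, g (x, a) ∂ν := by
  rw [Measure.integral_compProd hg, ← integral_const_mul]
  simp only [integral_fintype .of_finite, hκ, smul_eq_mul, Finset.mul_sum]

theorem integral_integral_selectedCost (hκ : ∀ x a, (κ x).real {a} = p)
    (hev : Measurable fun q : Θ × X ↦ ev q.1 q.2) (hcmeas : ∀ a, Measurable fun x ↦ c x a)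
    {C : ℝ} (hC : 0 ≤ C) (hc : ∀ x a, |c x a| ≤ C) (Q : Measure Θ) [IsProbabilityMeasure Q] :
    ∫ θ, ∫ z, selectedCost ev c θ z ∂(ν ⊗ₘ κ) ∂Q = p * risk ν c (posteriorPolicy ev Q) := by
  have hmeas := measurable_selectedCost hev hcmeas
  have hint : Integrable (fun q : Θ × (X × A) ↦ selectedCost ev c q.1 q.2)
      (Q.prod (ν ⊗ₘ κ)) :=
    .of_bound hmeas.aestronglyMeasurable C (ae_of_all _ fun q ↦ abs_selectedCost_le hC hc _ _)
  have hθ : Integrable (fun z ↦ ∫ θ, selectedCost ev c θ z ∂Q) (ν ⊗ₘ κ) := hint.integral_prod_right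
  have hQ (z : X × A) :
      ∫ θ, selectedCost ev c θ z ∂Q = posteriorPolicy ev Q z.1 z.2 * c z.1 z.2 :=
    integral_selectedCost (fun x ↦ hev.comp measurable_prodMk_right) Q z
  rw [integral_integral_swap hint, integral_compProd_of_const_propensity hκ hθ, risk]
  simp only [hQ]

end SelectedCost

end Policies

section Deviation

variable {X A Θ : Type*} [MeasurableSpace X] [Fintype A] [MeasurableSpace A]
  [MeasurableSingletonClass A] [MeasurableSpace Θ] {ev : Θ → X → A} {ν : Measure X}
  [IsProbabilityMeasure ν] {κ : Kernel X A} [IsMarkovKernel κ] {p : ℝ} {n : ℕ}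

theorem measure_selectedCost_pacBayes_failure_le
    (hev : Measurable fun q : Θ × X ↦ ev q.1 q.2) (hκ : ∀ x a, (κ x).real {a} = p)
    {c : X → A → ℝ} (hcmeas : ∀ a, Measurable fun x ↦ c x a) {C : ℝ} (hC : 0 ≤ C)
    (hc : ∀ x a, |c x a| ≤ C) (P : Measure Θ) [IsProbabilityMeasure P] {η : ℝ} (hη : 0 < η) :
    (Measure.pi fun _ : Fin n ↦ ν ⊗ₘ κ) {ω | ∃ Q : Measure Θ, IsProbabilityMeasure Q ∧
        InformationTheory.klDiv Q P ≠ ⊤ ∧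
        (InformationTheory.klDiv Q P).toReal + log (1 / η) <
          ∑ i, posteriorPolicy ev Q (ω i).1 (ω i).2 *
              (c (ω i).1 (ω i).2 - c (ω i).1 (ω i).2 ^ 2 / 2) -
            n * (p * risk ν (fun x a ↦ c x a + c x a ^ 2 / 2) (posteriorPolicy ev Q))} ≤
      ENNReal.ofReal η := by
  have hev' (x : X) : Measurable fun θ ↦ ev θ x := hev.comp measurable_prodMk_right
  have hmeas (a : A) : Measurable fun x ↦ c x a + c x a ^ 2 / 2 :=
    (hcmeas a).add (((hcmeas a).pow_const 2).div_const 2)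
  have hbound (x : X) (a : A) : |c x a + c x a ^ 2 / 2| ≤ C + C ^ 2 / 2 :=
    abs_add_sq_div_two_le (hc x a)
  have key := measure_secondMoment_pacBayes_failure_le (ι := Fin n) P (ν ⊗ₘ κ)
    (measurable_selectedCost hev hcmeas) (abs_selectedCost_le hC hc) hη
  simp only [map_selectedCost (f := fun y ↦ y - y ^ 2 / 2) (by norm_num),
    map_selectedCost (f := fun y ↦ y + y ^ 2 / 2) (by norm_num)] at key
  refine (measure_mono ?_).trans key
  rintro ω ⟨Q, hQ, hQP, hlt⟩
  refine ⟨Q, hQ, hQP, hlt.trans_eq ?_⟩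
  rw [integral_integral_selectedCost hκ hev hmeas (by positivity) hbound, Fintype.card_fin]
  simp only [integral_selectedCost hev']

variable {c : X → A → ℝ}

theorem measure_ipsRisk_sub_risk_failure_le
    (hev : Measurable fun q : Θ × X ↦ ev q.1 q.2) (hκ : ∀ x a, (κ x).real {a} = p)
    (hcmeas : ∀ a, Measurable fun x ↦ c x a) (hc : ∀ x a, |c x a| ≤ 1) (hp : 0 < p) (hn : n ≠ 0)
    (P : Measure Θ) [IsProbabilityMeasure P] (α t : ℝ) {η : ℝ} (hη : 0 < η) :
    (Measure.pi fun _ : Fin n ↦ ν ⊗ₘ κ) {ω | ∃ Q : Measure Θ, IsProbabilityMeasure Q ∧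
        InformationTheory.klDiv Q P ≠ ⊤ ∧
        (InformationTheory.klDiv Q P).toReal + log (1 / η) <
          n * t * (ipsRisk c (fun _ _ ↦ p) α (posteriorPolicy ev Q) ω -
              p ^ (1 - α) * risk ν c (posteriorPolicy ev Q)) -
            n * t ^ 2 / 2 * ipsSecondMoment c (fun _ _ ↦ p) α (posteriorPolicy ev Q) ω} ≤
      ENNReal.ofReal η := by
  set s := t / p ^ α
  have hscaled (x : X) (a : A) : |s * c x a| ≤ |s| := by
    rw [abs_mul]
    exact mul_le_of_le_one_right (abs_nonneg s) (hc x a)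
  have hsmeas (a : A) : Measurable fun x ↦ s * c x a := (hcmeas a).const_mul s
  refine (measure_mono ?_).trans (measure_selectedCost_pacBayes_failure_le (n := n) hev hκ
    hsmeas (abs_nonneg s) hscaled P hη)
  rintro ω ⟨Q, hQ, hQP, hlt⟩
  refine ⟨Q, hQ, hQP, hlt.trans_le ?_⟩
  have hpol : IsPolicy (posteriorPolicy ev Q) :=
    isPolicy_posteriorPolicy (fun x ↦ hev.comp measurable_prodMk_right) Q
  have hrisk := risk_posteriorPolicy_add_sq_div_two_le (ν := ν) hev Q hsmeas hscaled
  rw [risk_const_mul, sq_abs] at hrisk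
  rw [hpol.ips_deviation_const_eq_sum hn hp]
  gcongr

theorem measure_abs_ipsRisk_sub_risk_failure_le
    (hev : Measurable fun q : Θ × X ↦ ev q.1 q.2) (hκ : ∀ x a, (κ x).real {a} = p)
    (hcmeas : ∀ a, Measurable fun x ↦ c x a) (hc : ∀ x a, |c x a| ≤ 1) (hp : 0 < p) (hn : n ≠ 0)
    (P : Measure Θ) [IsProbabilityMeasure P] (α : ℝ) {lam : ℝ} (hlam : 0 < lam) {η : ℝ}
    (hη : 0 < η) :
    (Measure.pi fun _ : Fin n ↦ ν ⊗ₘ κ) {ω | ∃ Q : Measure Θ, IsProbabilityMeasure Q ∧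
        InformationTheory.klDiv Q P ≠ ⊤ ∧
        ((InformationTheory.klDiv Q P).toReal + log (1 / η)) / (n * lam) +
            lam / 2 * ipsSecondMoment c (fun _ _ ↦ p) α (posteriorPolicy ev Q) ω <
          |ipsRisk c (fun _ _ ↦ p) α (posteriorPolicy ev Q) ω -
            p ^ (1 - α) * risk ν c (posteriorPolicy ev Q)|} ≤ ENNReal.ofReal (2 * η) := by
  have hfail (t : ℝ) := measure_ipsRisk_sub_risk_failure_le (ν := ν) (n := n) hev hκ hcmeas hc hp
    hn P α t hη
  have hclear {k D V : ℝ} (h : k / (n * lam) + lam / 2 * V < D) :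
      k < n * lam * D - n * lam ^ 2 / 2 * V := by
    rw [← lt_sub_iff_add_lt, div_lt_iff₀ (by positivity)] at h
    linarith
  refine (measure_mono ?_).trans ((measure_union_le _ _).trans
    ((add_le_add (hfail lam) (hfail (-lam))).trans_eq ?_))
  · rintro ω ⟨Q, hQ, hQP, hlt⟩
    rcases lt_abs.mp hlt with h | h
    · exact .inl ⟨Q, hQ, hQP, hclear h⟩
    · refine .inr ⟨Q, hQ, hQP, (hclear h).trans_eq ?_⟩
      ring
  · rw [← ENNReal.ofReal_add hη.le hη.le, two_mul]

end Deviation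

section OracleInequality

variable {X A Θ : Type*} [MeasurableSpace X] [Fintype A] {ν : Measure X}
  [IsProbabilityMeasure ν] {c : X → A → ℝ} {p α lam δ : ℝ} {n : ℕ}

theorem IsPolicy.risk_le_of_pacBayesObjective_le {pol pol' : X → A → ℝ} (hpol : IsPolicy pol)
    (hpol' : IsPolicy pol') (hc : ∀ x a, c x a ∈ Set.Icc (-1) 0) (hp0 : 0 ≤ p) (hp1 : p ≤ 1)
    (hα : α ≤ 1) (hlam : 0 ≤ lam) (hn : n ≠ 0) {k k' : ℝ} {ω : Fin n → X × A}
    (hdev : |ipsRisk c (fun _ _ ↦ p) α pol ω - p ^ (1 - α) * risk ν c pol| ≤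
      (k + log (4 / δ)) / (n * lam) + lam / 2 * ipsSecondMoment c (fun _ _ ↦ p) α pol ω)
    (hdev' : |ipsRisk c (fun _ _ ↦ p) α pol' ω - p ^ (1 - α) * risk ν c pol'| ≤
      (k' + log (4 / δ)) / (n * lam) + lam / 2 * ipsSecondMoment c (fun _ _ ↦ p) α pol' ω)
    (hobj : pacBayesObjective c (fun _ _ ↦ p) α lam δ pol k ω ≤
      pacBayesObjective c (fun _ _ ↦ p) α lam δ pol' k' ω) :
    risk ν c pol ≤ risk ν c pol' + ((1 - p ^ (1 - α)) +
      √((k' + log (4 * √n / δ)) / (2 * n)) + 2 * ((k' + log (4 / δ)) / (n * lam)) +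
      2 * lam * (p ^ (2 * α))⁻¹) := by
  have hq0 : 0 ≤ p ^ (1 - α) := by positivity
  have hq1 : p ^ (1 - α) ≤ 1 := rpow_le_one hp0 hp1 (sub_nonneg.mpr hα)
  have hR := (hpol.risk_mem_Icc (ν := ν) (by simp) hc).2
  have hR' := (hpol'.risk_mem_Icc (ν := ν) (by simp) hc).1
  have hcabs (x : X) (a : A) : |c x a| ≤ 1 :=
    abs_le.mpr ⟨(hc x a).1, (hc x a).2.trans zero_le_one⟩
  have hV := mul_le_mul_of_nonneg_left
    (hpol'.ipsSecondMoment_const_le hn hcabs hp0 hp1 α ω) hlam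
  have hbiased : risk ν c pol ≤ p ^ (1 - α) * risk ν c pol := by nlinarith
  have hbiased' : p ^ (1 - α) * risk ν c pol' ≤ risk ν c pol' + (1 - p ^ (1 - α)) := by nlinarith
  rw [pacBayesObjective, pacBayesObjective, hpol.ipsBias_const hn, hpol'.ipsBias_const hn] at hobj
  rw [div_eq_mul_inv 2] at hV
  linarith [(abs_le.mp hdev).1, (abs_le.mp hdev').2,
    sqrt_nonneg ((k + log (4 * √n / δ)) / (2 * n))]

variable [MeasurableSpace A] [MeasurableSingletonClass A] [MeasurableSpace Θ] {ev : Θ → X → A}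
  {κ : Kernel X A} [IsMarkovKernel κ]

theorem ofReal_one_sub_le_measure_risk_posteriorPolicy_le
    (hev : Measurable fun q : Θ × X ↦ ev q.1 q.2) (hκ : ∀ x a, (κ x).real {a} = p)
    (hcmeas : ∀ a, Measurable fun x ↦ c x a) (hc : ∀ x a, c x a ∈ Set.Icc (-1) 0) (hp0 : 0 < p)
    (hp1 : p ≤ 1) (hα : α ≤ 1) (hlam : 0 < lam) (hδ : 0 < δ) (hn : n ≠ 0)
    {P : Measure Θ} [IsProbabilityMeasure P] {Qhat : (Fin n → X × A) → Measure Θ}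
    [∀ ω, IsProbabilityMeasure (Qhat ω)] (hQhat : ∀ ω, InformationTheory.klDiv (Qhat ω) P ≠ ⊤)
    {Qstar : Measure Θ} [IsProbabilityMeasure Qstar]
    (hQstar : InformationTheory.klDiv Qstar P ≠ ⊤)
    (hobj : ∀ ω, pacBayesObjective c (fun _ _ ↦ p) α lam δ (posteriorPolicy ev (Qhat ω))
        (InformationTheory.klDiv (Qhat ω) P).toReal ω ≤
      pacBayesObjective c (fun _ _ ↦ p) α lam δ (posteriorPolicy ev Qstar)
        (InformationTheory.klDiv Qstar P).toReal ω) :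
    ENNReal.ofReal (1 - δ) ≤ (Measure.pi fun _ : Fin n ↦ ν ⊗ₘ κ)
      {ω | risk ν c (posteriorPolicy ev (Qhat ω)) ≤ risk ν c (posteriorPolicy ev Qstar) +
        ((1 - p ^ (1 - α)) +
          √(((InformationTheory.klDiv Qstar P).toReal + log (4 * √n / δ)) / (2 * n)) +
          2 * (((InformationTheory.klDiv Qstar P).toReal + log (4 / δ)) / (n * lam)) +
          2 * lam * (p ^ (2 * α))⁻¹)} := by
  set good : Set (Fin n → X × A) := {ω | _}
  have hpol (Q : Measure Θ) [IsProbabilityMeasure Q] : IsPolicy (posteriorPolicy ev Q) :=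
    isPolicy_posteriorPolicy (fun x ↦ hev.comp measurable_prodMk_right) Q
  have hcabs (x : X) (a : A) : |c x a| ≤ 1 :=
    abs_le.mpr ⟨(hc x a).1, (hc x a).2.trans zero_le_one⟩
  have hfail : (Measure.pi fun _ : Fin n ↦ ν ⊗ₘ κ) goodᶜ ≤ ENNReal.ofReal δ := by
    refine (measure_mono fun ω hω ↦ ?_).trans
      ((measure_abs_ipsRisk_sub_risk_failure_le hev hκ hcmeas hcabs hp0 hn P α hlam
        (η := δ / 4) (by positivity)).trans (ENNReal.ofReal_le_ofReal (by linarith)))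
    contrapose! hω
    simp only [Set.mem_ofPred_eq, not_exists, not_and, not_lt, one_div_div] at hω
    exact not_not.mpr ((hpol (Qhat ω)).risk_le_of_pacBayesObjective_le (hpol Qstar) hc hp0.le hp1
      hα hlam.le hn (hω _ inferInstance (hQhat ω)) (hω _ inferInstance hQstar) (hobj ω))
  rw [ENNReal.ofReal_sub _ hδ.le, ENNReal.ofReal_one, tsub_le_iff_right]
  calc 1 = (Measure.pi fun _ : Fin n ↦ ν ⊗ₘ κ) (good ∪ goodᶜ) := by
        rw [Set.union_compl_self, measure_univ]
    _ ≤ _ := (measure_union_le _ _).trans (add_le_add_right hfail _)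

end OracleInequality

section SampleComplexity

theorem excess_risk_bound_le_of_le_sqrt {n : ℕ} (hn : n ≠ 0) {k l l' b B ε : ℝ} (hb : 0 ≤ b)
    (hε : 2 * b < ε)
    (hcond : (√(2 * k) + 2 * k + 2 * l + √(2 * l') + 2 * B) / (ε - 2 * b) ≤ √n) :
    b + √((k + l') / (2 * n)) + 2 * ((k + l) / (n * (√n)⁻¹)) + 2 * (√n)⁻¹ * B ≤ ε := by
  have hs : 0 < √(n : ℝ) := by positivity
  have hsqrt : √((k + l') / (2 * n)) ≤ (√(2 * k) + √(2 * l')) / √n := by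
    rw [← div_div, sqrt_div' _ n.cast_nonneg]
    gcongr
    have hk : 2 * k ≤ √(2 * k) ^ 2 := (sqrt_le_iff.mp le_rfl).2
    have hl' : 2 * l' ≤ √(2 * l') ^ 2 := (sqrt_le_iff.mp le_rfl).2
    exact sqrt_le_iff.mpr ⟨by positivity, by
      nlinarith [mul_nonneg (sqrt_nonneg (2 * k)) (sqrt_nonneg (2 * l'))]⟩
  have hn_div : (n : ℝ) * (√n)⁻¹ = √n := by rw [← div_eq_mul_inv, div_sqrt]
  rw [div_le_iff₀ (sub_pos.mpr hε), ← div_le_iff₀' hs] at hcond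
  rw [hn_div]
  calc _ ≤ b + (√(2 * k) + √(2 * l')) / √n + 2 * ((k + l) / √n) + 2 * (√n)⁻¹ * B := by gcongr
    _ = b + (√(2 * k) + 2 * k + 2 * l + √(2 * l') + 2 * B) / √n := by ring
    _ ≤ ε := by linarith

theorem sample_complexity_gaussian_uniform_logging_general {X A Θ : Type*} [MeasurableSpace X]
    [Fintype A] [MeasurableSpace A] [MeasurableSingletonClass A] [MeasurableSpace Θ] {K : ℕ}
    (hK : Fintype.card A = K)
    {ν : Measure X} [IsProbabilityMeasure ν] {c : X → A → ℝ}
    (hcmeas : ∀ a, Measurable fun x ↦ c x a) (hc : ∀ x a, c x a ∈ Set.Icc (-1) 0)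
    {κ : Kernel X A} [IsMarkovKernel κ] (hκ : ∀ x a, (κ x).real {a} = (K : ℝ)⁻¹)
    {ev : Θ → X → A} (hev : Measurable fun q : Θ × X ↦ ev q.1 q.2)
    {P : Measure Θ} [IsProbabilityMeasure P] {n : ℕ} (hn : n ≠ 0) {δ : ℝ} (hδ : 0 < δ)
    {α : ℝ} (hα : α ≤ 1) {Qhat : (Fin n → X × A) → Measure Θ}
    [∀ ω, IsProbabilityMeasure (Qhat ω)] (hQhat : ∀ ω, InformationTheory.klDiv (Qhat ω) P ≠ ⊤)
    {Qstar : Measure Θ} [IsProbabilityMeasure Qstar]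
    (hQstar : InformationTheory.klDiv Qstar P ≠ ⊤)
    (hobj : ∀ ω,
      pacBayesObjective c (fun _ _ ↦ (K : ℝ)⁻¹) α (√n)⁻¹ δ
        (posteriorPolicy ev (Qhat ω)) (InformationTheory.klDiv (Qhat ω) P).toReal ω ≤
      pacBayesObjective c (fun _ _ ↦ (K : ℝ)⁻¹) α (√n)⁻¹ δ
        (posteriorPolicy ev Qstar) (InformationTheory.klDiv Qstar P).toReal ω)
    {ε : ℝ} (hε : 2 * (1 - (K : ℝ) ^ (α - 1)) < ε)
    (hcond : (√(2 * (InformationTheory.klDiv Qstar P).toReal) +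
          2 * (InformationTheory.klDiv Qstar P).toReal + 2 * log (4 / δ) +
          √(2 * log (4 * √n / δ)) + 2 * (K : ℝ) ^ (2 * α)) /
        (ε - 2 * (1 - (K : ℝ) ^ (α - 1))) ≤ √n) :
    ENNReal.ofReal (1 - δ) ≤ (Measure.pi fun _ : Fin n ↦ ν ⊗ₘ κ)
      {ω | risk ν c (posteriorPolicy ev (Qhat ω)) ≤ risk ν c (posteriorPolicy ev Qstar) + ε} := by
  obtain ⟨x⟩ := ν.nonempty_of_neZero
  obtain ⟨a⟩ := (κ x).nonempty_of_neZero
  have hK_one : (1 : ℝ) ≤ K := mod_cast hK ▸ Fintype.card_pos_iff.mpr ⟨a⟩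
  have hpow_sub : ((K : ℝ)⁻¹) ^ (1 - α) = (K : ℝ) ^ (α - 1) := by
    rw [inv_rpow (by positivity), ← rpow_neg (by positivity), neg_sub]
  have hpow_two_mul : (((K : ℝ)⁻¹) ^ (2 * α))⁻¹ = (K : ℝ) ^ (2 * α) := by
    rw [inv_rpow (by positivity), inv_inv]
  have hbias : 0 ≤ 1 - (K : ℝ) ^ (α - 1) :=
    sub_nonneg.mpr (rpow_le_one_of_one_le_of_nonpos hK_one (sub_nonpos.mpr hα))
  refine (ofReal_one_sub_le_measure_risk_posteriorPolicy_le hev hκ hcmeas hc (by positivity)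
    (inv_le_one_of_one_le₀ hK_one) hα (by positivity) hδ hn hQhat hQstar hobj).trans
    (measure_mono fun ω hω ↦ ?_)
  rw [Set.mem_ofPred_eq, hpow_sub, hpow_two_mul] at hω
  exact hω.trans (add_le_add_right (excess_risk_bound_le_of_le_sqrt hn hbias hε hcond) _)

end SampleComplexity

/-- **Sample complexity under uniform logging.**  In the setting of the oracle inequality for
Gaussian linear policies under uniform logging, if `α ∈ [1 − log 2/log K, 1]`,
`ε > 2(1 − K^(α−1))` and `√n` is at least
`(‖μstar − μ0‖ + ‖μstar − μ0‖² + 2 log(4/δ) + √(2 log(4√n/δ)) + 2 K^(2α)) / (ε − 2(1 − K^(α−1)))`,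
then with probability at least `1 − δ`, the risk of the learned policy is within `ε` of the
optimal risk. -/
theorem sample_complexity_gaussian_uniform_logging
    {X : Type*} [MeasurableSpace X] {d K : ℕ} (hK : 0 < K)
    (ν : Measure X) [IsProbabilityMeasure ν]
    (c : X → Fin K → ℝ)
    (hcmeas : ∀ a, Measurable fun x => c x a)
    (hc : ∀ x a, c x a ∈ Set.Icc (-1 : ℝ) 0)
    (φ : X → Fin d → ℝ) (hφ : Measurable φ)
    (p0 : X → Fin K → ℝ) (huniform : ∀ x a, p0 x a = (K : ℝ)⁻¹)
    (κ0 : Kernel X (Fin K)) [IsMarkovKernel κ0]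
    (hκ0 : ∀ x a, κ0 x {a} = ENNReal.ofReal (p0 x a))
    (ev : (Fin K → Fin d → ℝ) → X → Fin K)
    (hev : Measurable fun q : (Fin K → Fin d → ℝ) × X => ev q.1 q.2)
    (hargmax : ∀ (θ : Fin K → Fin d → ℝ) (x : X) (a : Fin K),
      ∑ j, φ x j * θ a j ≤ ∑ j, φ x j * θ (ev θ x) j)
    (G : (Fin K → Fin d → ℝ) → Measure (Fin K → Fin d → ℝ))
    (hG : ∀ μm : Fin K → Fin d → ℝ,
      G μm = Measure.pi fun a => Measure.pi fun j => gaussianReal (μm a j) 1)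
    (μ0 : Fin K → Fin d → ℝ)
    (n : ℕ) (hn : 1 ≤ n) (δ : ℝ) (hδ : δ ∈ Set.Ioo (0 : ℝ) 1)
    (α : ℝ) (hα : α ∈ Set.Icc (0 : ℝ) 1)
    (Rk : (Fin K → Fin d → ℝ) → ℝ)
    (hRk : ∀ μm : Fin K → Fin d → ℝ,
      Rk μm = ∫ x, ∑ a, ((G μm) {θ | ev θ x = a}).toReal * c x a ∂ν)
    (F : (Fin n → X × Fin K) → (Fin K → Fin d → ℝ) → ℝ)
    (hF : ∀ (ω : Fin n → X × Fin K) (μm : Fin K → Fin d → ℝ), F ω μm =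
      (n : ℝ)⁻¹ * (∑ i, c (ω i).1 (ω i).2 * ((G μm) {θ | ev θ (ω i).1 = (ω i).2}).toReal
          / p0 (ω i).1 (ω i).2 ^ α)
        + Real.sqrt (((klDiv (G μm) (G μ0)).toReal + Real.log (4 * Real.sqrt n / δ))
            / (2 * n))
        + (1 - (n : ℝ)⁻¹ * ∑ i, ∑ a,
            ((G μm) {θ | ev θ (ω i).1 = a}).toReal * p0 (ω i).1 a ^ (1 - α))
        + ((klDiv (G μm) (G μ0)).toReal + Real.log (4 / δ)) / (n * (Real.sqrt n)⁻¹)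
        + (Real.sqrt n)⁻¹ / 2 * ((n : ℝ)⁻¹ * ∑ i,
            ((∑ a, p0 (ω i).1 a *
                (((G μm) {θ | ev θ (ω i).1 = a}).toReal / p0 (ω i).1 a ^ (2 * α)))
              + ((G μm) {θ | ev θ (ω i).1 = (ω i).2}).toReal * c (ω i).1 (ω i).2 ^ 2
                  / p0 (ω i).1 (ω i).2 ^ (2 * α))))
    (μhat : (Fin n → X × Fin K) → Fin K → Fin d → ℝ)
    (hμhat : ∀ (ω : Fin n → X × Fin K) (μm : Fin K → Fin d → ℝ), F ω (μhat ω) ≤ F ω μm)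
    (μstar : Fin K → Fin d → ℝ)
    (hμstar : ∀ μm : Fin K → Fin d → ℝ, Rk μstar ≤ Rk μm)
    (N2 : ℝ) (hN2 : N2 = ∑ a, ∑ j, (μstar a j - μ0 a j) ^ 2)
    (hαlow : 1 - Real.log 2 / Real.log K ≤ α)
    (ε : ℝ) (hε : 2 * (1 - (K : ℝ) ^ (α - 1)) < ε)
    (hcond : (Real.sqrt N2 + N2 + 2 * Real.log (4 / δ)
          + Real.sqrt (2 * Real.log (4 * Real.sqrt n / δ)) + 2 * (K : ℝ) ^ (2 * α))
        / (ε - 2 * (1 - (K : ℝ) ^ (α - 1))) ≤ Real.sqrt n) :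
    ENNReal.ofReal (1 - δ) ≤
      (Measure.pi fun _ : Fin n => ν ⊗ₘ κ0)
        {ω | Rk (μhat ω) ≤ Rk μstar + ε} := by
  obtain rfl : G = _ := funext hG
  obtain rfl : p0 = _ := funext₂ huniform
  have hkl (m : Fin K → Fin d → ℝ) := klDiv_pi_pi_gaussianReal m μ0 one_ne_zero
  have hfin (m : Fin K → Fin d → ℝ) := (hkl m).trans_ne ENNReal.ofReal_ne_top
  have hκ (x : X) (a : Fin K) : (κ0 x).real {a} = (K : ℝ)⁻¹ := by
    rw [measureReal_def, hκ0, ENNReal.toReal_ofReal (by positivity)]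
  simp only [hF, klDiv_eq_informationTheory_klDiv] at hμhat
  simp only [hRk]
  refine sample_complexity_gaussian_uniform_logging_general (Fintype.card_fin K) hcmeas hc hκ hev
    (Nat.one_le_iff_ne_zero.mp hn) hδ.1 hα.2 (fun ω ↦ hfin (μhat ω)) (hfin μstar)
    (fun ω ↦ hμhat ω μstar) hε ?_
  rwa [hkl, ENNReal.toReal_ofReal (by positivity), NNReal.coe_one, mul_one,
    mul_div_cancel₀ _ two_ne_zero, ← hN2]
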